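/- Let A and B be C*-algebras, let I be a closed two-sided ideal of A and J a closed two-sided ideal of B, and let π : A → A/I and ρ : B → B/J be the canonical quotient maps. Then the induced map π ⊗̂ ρ : A ⊗̂ B → (A/I) ⊗̂ (B/J) is a quotient map (it maps the open unit ball of A ⊗̂ B onto the open unit ball of (A/I) ⊗̂ (B/J)), and its kernel equals A ⊗̂ J + I ⊗̂ B. -/

import Mathlib

open scoped TensorProduct
open Pointwise

universe u

noncomputable section

/-- A C⋆-norm on a complex `*`-algebra.  On a matrix algebra over a C⋆-algebra such a
norm is unique, namely the canonical C⋆-norm. -/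
structure IsCStarNorm {M : Type*} [NonUnitalRing M] [StarRing M] [Module ℂ M]
    (N : M → ℝ) : Prop where
  add_le : ∀ x y, N (x + y) ≤ N x + N y
  smul_eq : ∀ (c : ℂ) (x : M), N (c • x) = ‖c‖ * N x
  eq_zero_of : ∀ x, N x = 0 → x = 0
  mul_le : ∀ x y, N (x * y) ≤ N x * N y
  star_mul_self : ∀ x, N (star x * x) = N x * N x

/-- The operator space projective tensor norm `‖·‖_∧` on the algebraic tensor product
`A ⊗ B`, relative to given families of matrix norms on `A` and `B`:
`‖u‖_∧ = inf { ‖α‖ ‖v‖ ‖w‖ ‖β‖ : u = α (v ⊗ w) β }` where `v ∈ M_p(A)`, `w ∈ M_q(B)`,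
`α ∈ M_{1,pq}(ℂ)` and `β ∈ M_{pq,1}(ℂ)` (row and column vectors carrying the Euclidean
norm, which is their norm as scalar matrices). -/
noncomputable def osProjNorm {A B : Type u}
    [AddCommGroup A] [Module ℂ A] [AddCommGroup B] [Module ℂ B]
    (NA : ∀ p : ℕ, Matrix (Fin p) (Fin p) A → ℝ)
    (NB : ∀ q : ℕ, Matrix (Fin q) (Fin q) B → ℝ) (u : A ⊗[ℂ] B) : ℝ :=
  sInf { r : ℝ | ∃ (p q : ℕ) (α : Fin p × Fin q → ℂ) (v : Matrix (Fin p) (Fin p) A)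
      (w : Matrix (Fin q) (Fin q) B) (β : Fin p × Fin q → ℂ),
      u = ∑ ik : Fin p × Fin q, ∑ jl : Fin p × Fin q,
            (α ik * β jl) • (v ik.1 jl.1 ⊗ₜ[ℂ] w ik.2 jl.2) ∧
      r = Real.sqrt (∑ ik, ‖α ik‖ ^ 2) * NA p v * NB q w *
            Real.sqrt (∑ jl, ‖β jl‖ ^ 2) }

/-- `X` is a completion of the algebraic tensor product `A ⊗ B` with respect to the
norm `ν`, via the (necessarily isometric) dense embedding `ι`, and the multiplication and
involution of `X` are the canonical ones induced from `A` and `B`.  Applied with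
`ν = osProjNorm NA NB` (for the canonical matrix C⋆-norms `NA`, `NB`) this characterizes
the Banach `*`-algebra `A ⊗̂ B` (the operator space projective tensor product) up to
isometric `*`-isomorphism; applied with `ν = bsProjNorm` it characterizes the Banach
space projective tensor product `A ⊗_γ B`. -/
structure IsTensorCompletion {A B : Type u} [NonUnitalRing A] [StarRing A] [Module ℂ A]
    [NonUnitalRing B] [StarRing B] [Module ℂ B] (ν : A ⊗[ℂ] B → ℝ)
    (X : Type u) [NonUnitalNormedRing X] [StarRing X] [NormedSpace ℂ X] [CompleteSpace X]
    (ι : A ⊗[ℂ] B →ₗ[ℂ] X) : Prop where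
  norm_eq : ∀ u, ‖ι u‖ = ν u
  dense : DenseRange ι
  mul_tmul : ∀ (a c : A) (b d : B),
    ι (a ⊗ₜ[ℂ] b) * ι (c ⊗ₜ[ℂ] d) = ι ((a * c) ⊗ₜ[ℂ] (b * d))
  star_tmul : ∀ (a : A) (b : B), star (ι (a ⊗ₜ[ℂ] b)) = ι (star a ⊗ₜ[ℂ] star b)

/-- The product ideal `S ⊗̂ T`: the closure in `X` (a completion of `A ⊗ B`) of the span of
elementary tensors `a ⊗ b` with `a ∈ S`, `b ∈ T`. -/
def tensorIdeal {A B : Type u} [NonUnitalRing A] [StarRing A] [Module ℂ A]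
    [NonUnitalRing B] [StarRing B] [Module ℂ B]
    {X : Type u} [NonUnitalNormedRing X] [StarRing X] [NormedSpace ℂ X] [CompleteSpace X]
    (ι : A ⊗[ℂ] B →ₗ[ℂ] X) (S : Set A) (T : Set B) : Set X :=
  closure (ι '' (Submodule.span ℂ (Set.image2 (fun a b => a ⊗ₜ[ℂ] b) S T)))

/-- A closed prime (two-sided) ideal of a Banach algebra: a proper closed two-sided ideal `K`
such that whenever the product of two closed two-sided ideals is contained in `K`, one of them
is contained in `K`. -/
def IsClosedPrimeIdeal {Y : Type u} [NonUnitalNormedRing Y] (K : TwoSidedIdeal Y) : Prop :=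
  IsClosed (K : Set Y) ∧ (K : Set Y) ≠ Set.univ ∧
    ∀ I J : TwoSidedIdeal Y, IsClosed (I : Set Y) → IsClosed (J : Set Y) →
      (∀ x ∈ I, ∀ y ∈ J, x * y ∈ K) → (I : Set Y) ⊆ (K : Set Y) ∨ (J : Set Y) ⊆ (K : Set Y)

/-- An irreducible continuous `*`-representation of a Banach `*`-algebra `Y` on a complex
Hilbert space. -/
structure IrreducibleRepOn (Y : Type u)
    [NonUnitalNormedRing Y] [StarRing Y] [NormedSpace ℂ Y] where
  H : Type u
  [normH : NormedAddCommGroup H]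
  [ipsH : InnerProductSpace ℂ H]
  [csH : CompleteSpace H]
  π : Y →⋆ₙₐ[ℂ] (H →L[ℂ] H)
  continuous : Continuous π
  nonzero : ∃ y, π y ≠ 0
  irreducible : ∀ S : Submodule ℂ H, IsClosed (S : Set H) →
    (∀ y : Y, ∀ v ∈ S, π y v ∈ S) → S = ⊥ ∨ S = ⊤

/-- A primitive ideal: the kernel of an irreducible `*`-representation. -/
def IsPrimitiveIdeal {Y : Type u} [NonUnitalNormedRing Y] [StarRing Y] [NormedSpace ℂ Y]
    (K : TwoSidedIdeal Y) : Prop :=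
  ∃ ρ : IrreducibleRepOn Y, ∀ y, y ∈ K ↔ ρ.π y = 0

/-- A subset `K` of a ring is modular (as an ideal) if there is a relative unit `e`
with `x * e - x ∈ K` and `e * x - x ∈ K` for every `x`. -/
def IsModularIdealSet {Y : Type u} [NonUnitalRing Y] (K : Set Y) : Prop :=
  ∃ e : Y, ∀ x : Y, x * e - x ∈ K ∧ e * x - x ∈ K

/-- A maximal modular (two-sided) ideal: a modular ideal which is proper and maximal among
proper two-sided ideals. -/
def IsMaximalModularIdeal {Y : Type u} [NonUnitalRing Y] (K : TwoSidedIdeal Y) : Prop :=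
  IsModularIdealSet (K : Set Y) ∧ (K : Set Y) ≠ Set.univ ∧
    ∀ L : TwoSidedIdeal Y, (K : Set Y) ⊆ (L : Set Y) →
      (L : Set Y) = (K : Set Y) ∨ (L : Set Y) = Set.univ

/-- The operator norm of a `p × p` matrix of bounded operators on a Hilbert space `H`,
viewed as an operator on the `ℓ²`-direct sum `H ⊕ ⋯ ⊕ H`. -/
noncomputable def opMatrixNorm {H : Type u} [NormedAddCommGroup H] [InnerProductSpace ℂ H]
    {p : ℕ} (T : Matrix (Fin p) (Fin p) (H →L[ℂ] H)) : ℝ :=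
  sSup { r : ℝ | ∃ x : Fin p → H, (∑ i, ‖x i‖ ^ 2) ≤ 1 ∧
      r = Real.sqrt (∑ i, ‖∑ j, (T i j) (x j)‖ ^ 2) }

/-- An operator algebra structure on a Banach algebra `Y`: a bicontinuous algebra
homomorphism of `Y` into the bounded operators on some Hilbert space. -/
structure OperatorAlgebraEmbedding (Y : Type u) [NonUnitalNormedRing Y] [NormedSpace ℂ Y] where
  H : Type u
  [normH : NormedAddCommGroup H]
  [ipsH : InnerProductSpace ℂ H]
  [csH : CompleteSpace H]
  ρ : Y →ₙₐ[ℂ] (H →L[ℂ] H)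
  c : ℝ
  C : ℝ
  c_pos : 0 < c
  lower : ∀ y, c * ‖y‖ ≤ ‖ρ y‖
  upper : ∀ y, ‖ρ y‖ ≤ C * ‖y‖

/-- The matrix norms on `Y` induced by an operator algebra embedding, giving `Y` its
operator space structure: the norm of `v ∈ M_p(Y)` is the operator norm of the matrix
of operators obtained by applying the embedding entrywise. -/
noncomputable def OperatorAlgebraEmbedding.matrixNorm {Y : Type u}
    [NonUnitalNormedRing Y] [NormedSpace ℂ Y] (e : OperatorAlgebraEmbedding Y)
    (p : ℕ) (v : Matrix (Fin p) (Fin p) Y) : ℝ :=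
  letI := e.normH; letI := e.ipsH
  opMatrixNorm (v.map e.ρ)

/-- The Banach space projective tensor norm `‖·‖_γ` on the algebraic tensor product. -/
noncomputable def bsProjNorm {A B : Type u} [NonUnitalNormedRing A] [NormedSpace ℂ A]
    [NonUnitalNormedRing B] [NormedSpace ℂ B] (u : A ⊗[ℂ] B) : ℝ :=
  sInf { r : ℝ | ∃ (n : ℕ) (a : Fin n → A) (b : Fin n → B),
      u = ∑ i, a i ⊗ₜ[ℂ] b i ∧ r = ∑ i, ‖a i‖ * ‖b i‖ }

/-- A C⋆-algebra `A` is subhomogeneous if there is `n : ℕ` bounding the (finite)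
dimensions of all its irreducible `*`-representations. -/
def IsSubhomogeneous (A : Type u) [NonUnitalCStarAlgebra A] : Prop :=
  ∃ n : ℕ, ∀ ρ : IrreducibleRepOn A,
    letI := ρ.normH
    letI := ρ.ipsH
    FiniteDimensional ℂ ρ.H ∧ Module.finrank ℂ ρ.H ≤ n



namespace IsCStarNorm

variable {M : Type*} [NonUnitalRing M] [StarRing M] [Module ℂ M] {N : M → ℝ}

theorem zero (hN : IsCStarNorm N) : N 0 = 0 := by
  simpa using hN.smul_eq 0 0

theorem neg (hN : IsCStarNorm N) (x : M) : N (-x) = N x := by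
  simpa using hN.smul_eq (-1) x

theorem nonneg (hN : IsCStarNorm N) (x : M) : 0 ≤ N x := by
  have := hN.add_le x (-x)
  rw [add_neg_cancel, hN.zero, hN.neg] at this
  linarith

theorem star_eq (hN : IsCStarNorm N) (x : M) : N (star x) = N x := by
  have key : ∀ y, N y ≤ N (star y) := by
    intro y
    by_contra! h
    have h1 := hN.mul_le (star y) y
    rw [hN.star_mul_self] at h1
    have h2 := hN.nonneg (star y)
    have h3 : 0 < N y := by linarith
    nlinarith
  exact le_antisymm (by simpa using key (star x)) (key x)

theorem self_mul_star (hN : IsCStarNorm N) (x : M) : N (x * star x) = N x * N x := by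
  have := hN.star_mul_self (star x)
  rwa [star_star, hN.star_eq] at this

end IsCStarNorm

section uniq

variable {M : Type*} [NonUnitalCStarAlgebra M] {N : M → ℝ}

theorem IsCStarNorm.le_one_of_selfAdjoint (hN : IsCStarNorm N) {h : M} (hh : IsSelfAdjoint h)
    (h1 : ‖h‖ ≤ 1) : N h ≤ 1 := by
  set k : M := cfcₙ (fun t : ℝ => Real.sqrt (1 - t ^ 2) - 1) h with hk
  have hks : IsSelfAdjoint k := cfcₙ_predicate _ _
  have hcont : Continuous (fun t : ℝ => Real.sqrt (1 - t ^ 2) - 1) := by fun_prop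
  have hcomm : h * k = k * h := by
    conv_lhs => rw [← cfcₙ_id' ℝ h]
    conv_rhs => rw [← cfcₙ_id' ℝ h]
    rw [hk, cfcₙ_id' ℝ h]
    nth_rw 1 [← cfcₙ_id' ℝ h]
    nth_rw 4 [← cfcₙ_id' ℝ h]
    rw [← cfcₙ_mul (fun t : ℝ => t) (fun t : ℝ => Real.sqrt (1 - t ^ 2) - 1) h
      (by fun_prop) (by simp) (by fun_prop) (by simp),
      ← cfcₙ_mul (fun t : ℝ => Real.sqrt (1 - t ^ 2) - 1) (fun t : ℝ => t) h
      (by fun_prop) (by simp) (by fun_prop) (by simp)]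
    congr 1; ext t; ring
  have hsq : h * h + (k + k + k * k) = 0 := by
    have e1 : h * h = cfcₙ (fun t : ℝ => t * t) h := by
      rw [cfcₙ_mul (fun t : ℝ => t) (fun t : ℝ => t) h, cfcₙ_id' ℝ h]
    have e2 : k + k + k * k = cfcₙ (fun t : ℝ => (Real.sqrt (1 - t ^ 2) - 1) +
        (Real.sqrt (1 - t ^ 2) - 1) +
        (Real.sqrt (1 - t ^ 2) - 1) * (Real.sqrt (1 - t ^ 2) - 1)) h := by
      rw [cfcₙ_add _ _ h (by fun_prop) (by simp) (by fun_prop) (by simp),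
        cfcₙ_add _ _ h (by fun_prop) (by simp) (by fun_prop) (by simp),
        cfcₙ_mul _ _ h (by fun_prop) (by simp) (by fun_prop) (by simp)]
    rw [e1, e2, ← cfcₙ_add _ _ h (by fun_prop) (by simp) (by fun_prop) (by simp)]
    rw [← cfcₙ_zero ℝ h]
    apply cfcₙ_congr
    intro t ht
    have ht1 : |t| ≤ 1 := by
      have := norm_apply_le_norm_cfcₙ (fun t : ℝ => t) h ht
      rw [cfcₙ_id' ℝ h] at this
      exact this.trans h1
    have ht2 : 0 ≤ 1 - t ^ 2 := by
      have := (sq_le_one_iff_abs_le_one t).2 ht1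
      linarith
    have := Real.mul_self_sqrt ht2
    simp only [Pi.zero_apply]
    nlinarith
  -- multiplication by a unitary preserves the norm
  have key : ∀ s : ℂ, star s = -s → s * s = -1 → ∀ x : M,
      N (x * h + s • (x + x * k)) = N x := by
    intro s hs hss x
    have e : (x * h + s • (x + x * k)) * star (x * h + s • (x + x * k)) = x * star x := by
      have hcomm' : ∀ z, h * (k * z) = k * (h * z) := fun z => by
        rw [← mul_assoc, hcomm, mul_assoc]
      have e0 : x * (h * h + (k + k + k * k)) * star x = 0 := by rw [hsq]; simp
      rw [star_add, star_smul, star_add, star_mul, star_mul, hh.star_eq, hks.star_eq, hs]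
      have e1 : (x * h + s • (x + x * k)) * (h * star x + -s • (star x + k * star x))
        = x * star x + x * (h * h + (k + k + k * k)) * star x
          - (s * s + 1) • ((x + x * k) * (star x + k * star x)) := by
        simp only [mul_add, add_mul, smul_mul_assoc, mul_smul_comm, smul_add, smul_smul,
          mul_assoc, hcomm', neg_smul, mul_neg, add_smul, one_smul]
        abel
      rw [e1, e0, hss]; simp
    have h1 := hN.self_mul_star (x * h + s • (x + x * k))
    rw [e, hN.self_mul_star] at h1
    have a := hN.nonneg x
    have b := hN.nonneg (x * h + s • (x + x * k))
    nlinarith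
  have hI := key Complex.I (by simp) (by simp) h
  have hI' := key (-Complex.I) (by simp) (by simp) h
  have hadd := hN.add_le (h * h + Complex.I • (h + h * k)) (h * h + (-Complex.I) • (h + h * k))
  have e : (h * h + Complex.I • (h + h * k)) + (h * h + (-Complex.I) • (h + h * k))
      = (2 : ℂ) • (h * h) := by
    rw [neg_smul, two_smul]; abel
  rw [e, hI, hI', hN.smul_eq] at hadd
  have h2 := hN.star_mul_self h
  rw [hh.star_eq] at h2
  rw [h2] at hadd
  simp at hadd
  by_contra! hc
  nlinarith

theorem IsCStarNorm.le_norm_of_selfAdjoint (hN : IsCStarNorm N) {h : M} (hh : IsSelfAdjoint h) :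
    N h ≤ ‖h‖ := by
  by_cases h0 : h = 0
  · simp [h0, hN.zero]
  have hp : 0 < ‖h‖ := norm_pos_iff.2 h0
  have h1 : IsSelfAdjoint (((‖h‖⁻¹ : ℝ) : ℂ) • h) := by
    rw [isSelfAdjoint_iff, star_smul, hh.star_eq]; simp
  have := hN.le_one_of_selfAdjoint h1 (by rw [norm_smul]; simp [hp.ne'])
  rw [hN.smul_eq] at this
  simp at this
  rwa [inv_mul_le_iff₀ hp, mul_one] at this

theorem IsCStarNorm.le_norm (hN : IsCStarNorm N) (x : M) : N x ≤ ‖x‖ := by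
  have h1 := hN.le_norm_of_selfAdjoint (IsSelfAdjoint.star_mul_self x)
  rw [hN.star_mul_self, CStarRing.norm_star_mul_self] at h1
  exact abs_le_of_sq_le_sq' (by nlinarith) (norm_nonneg _) |>.2

theorem IsCStarNorm.norm_le_of_selfAdjoint (hN : IsCStarNorm N) {h : M} (hh : IsSelfAdjoint h) :
    ‖h‖ ≤ N h := by
  by_contra! hlt
  obtain ⟨c, hc1, hc2⟩ := exists_between hlt
  have hc0 : 0 < c := lt_of_le_of_lt (hN.nonneg h) hc1
  have hm : ∀ t : ℝ, 0 < max |t| c := fun t => lt_max_of_lt_right hc0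
  set f : ℝ → ℝ := fun t => max 0 (|t| - c) with hf
  set g : ℝ → ℝ := fun t => t / (max |t| c) ^ 2 with hg
  have hfc : Continuous f := by fun_prop
  have hgc : Continuous g := by
    apply Continuous.div (by fun_prop) (by fun_prop)
    intro t; have := hm t; positivity
  have hf0 : f 0 = 0 := by simp [hf, hc0.le]
  have hg0 : g 0 = 0 := by simp [hg]
  have e : cfcₙ f h = h * cfcₙ f h * cfcₙ g h := by
    have : h * cfcₙ f h * cfcₙ g h = cfcₙ (fun t => t * f t * g t) h := by
      rw [cfcₙ_mul (fun t => t * f t) g h (by fun_prop) (by simp) (by fun_prop) hg0,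
        cfcₙ_mul (fun t => t) f h (by fun_prop) (by simp) (by fun_prop) hf0, cfcₙ_id' ℝ h]
    rw [this]
    congr 1
    ext t
    simp only [hf, hg]
    rcases le_total |t| c with h1 | h1
    · simp [max_eq_left (sub_nonpos.2 h1)]
    · rw [max_eq_left h1]
      have : 0 < |t| := lt_of_lt_of_le hc0 h1
      rw [sq_abs]
      have : t ≠ 0 := abs_pos.1 this
      field_simp
  have hgn : N (cfcₙ g h) ≤ 1 / c := by
    refine (hN.le_norm _).trans (norm_cfcₙ_le fun t _ => ?_)
    simp only [hg]
    rw [norm_div, Real.norm_eq_abs, Real.norm_eq_abs, abs_of_pos (by have := hm t; positivity : 0 < max |t| c ^ 2)]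
    rw [div_le_div_iff₀ (by have := hm t; positivity) hc0]
    have h1 := le_max_left |t| c
    have h2 := le_max_right |t| c
    have := abs_nonneg t
    nlinarith
  have hfz : N (cfcₙ f h) = 0 := by
    have h1 : N (cfcₙ f h) ≤ N h * N (cfcₙ f h) * (1 / c) := by
      calc N (cfcₙ f h) = N (h * cfcₙ f h * cfcₙ g h) := by rw [← e]
        _ ≤ N (h * cfcₙ f h) * N (cfcₙ g h) := hN.mul_le _ _
        _ ≤ (N h * N (cfcₙ f h)) * (1 / c) :=
          mul_le_mul (hN.mul_le _ _) hgn (hN.nonneg _) (mul_nonneg (hN.nonneg _) (hN.nonneg _))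
    rw [mul_one_div, le_div_iff₀ hc0] at h1
    have := hN.nonneg (cfcₙ f h)
    nlinarith
  have hz := hN.eq_zero_of _ hfz
  have : ‖h‖ ≤ c := by
    conv_lhs => rw [← cfcₙ_id' ℝ h]
    refine norm_cfcₙ_le fun t ht => ?_
    have := norm_apply_le_norm_cfcₙ f h ht (hf₀ := hf0)
    rw [hz, norm_zero] at this
    have h3 : f t = 0 := norm_le_zero_iff.1 this
    simp only [hf] at h3
    have := le_max_right 0 (|t| - c)
    rw [Real.norm_eq_abs]; linarith
  linarith

theorem IsCStarNorm.eq_norm (hN : IsCStarNorm N) (x : M) : N x = ‖x‖ := by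
  refine le_antisymm (hN.le_norm x) ?_
  have h1 := hN.norm_le_of_selfAdjoint (IsSelfAdjoint.star_mul_self x)
  rw [hN.star_mul_self, CStarRing.norm_star_mul_self] at h1
  exact abs_le_of_sq_le_sq' (by nlinarith) (hN.nonneg _) |>.2

/-- A surjective `*`-homomorphism of C⋆-algebras allows norm-preserving lifts. -/
theorem exists_norm_lift {M' : Type*} [NonUnitalCStarAlgebra M'] (φ : M →⋆ₙₐ[ℂ] M')
    (hφ : Function.Surjective φ) (y : M') : ∃ x, φ x = y ∧ ‖x‖ ≤ ‖y‖ := by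
  by_cases hy : y = 0
  · exact ⟨0, by simp [hy], by simp⟩
  obtain ⟨x, rfl⟩ := hφ y
  set c : ℝ := ‖φ x‖ ^ 2 with hc
  have hc0 : 0 < c := by have := norm_pos_iff.2 hy; positivity
  have hm : ∀ t : ℝ, 0 < max |t| c := fun t => lt_max_of_lt_right hc0
  set k : ℝ → ℝ := fun t => Real.sqrt (c / max |t| c) - 1 with hk
  have hkc : Continuous k := by
    refine (Continuous.sqrt ?_).sub continuous_const
    exact Continuous.div (by fun_prop) (by fun_prop) fun t => (hm t).ne'
  have hkz : ∀ t, |t| ≤ c → k t = 0 := by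
    intro t ht
    simp only [hk]
    rw [max_eq_right ht, div_self hc0.ne', Real.sqrt_one, sub_self]
  have hk0 : k 0 = 0 := hkz 0 (by simpa using hc0.le)
  set h := star x * x with hh
  have hsa : IsSelfAdjoint h := IsSelfAdjoint.star_mul_self x
  have hks : IsSelfAdjoint (cfcₙ k h) := cfcₙ_predicate _ _
  refine ⟨x + x * cfcₙ k h, ?_, ?_⟩
  · have e : φ (cfcₙ k h) = 0 := by
      have hsa' : IsSelfAdjoint (φ h) := hsa.map φ
      have hφc : Continuous φ := by
        exact AddMonoidHomClass.continuous_of_bound φ 1 fun z => by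
          simpa using NonUnitalStarAlgHom.norm_apply_le φ z
      rw [NonUnitalStarAlgHom.map_cfcₙ φ k h (by fun_prop) hk0 hφc hsa hsa',
        ← cfcₙ_zero ℝ (φ h)]
      apply cfcₙ_congr
      intro t ht
      apply hkz
      have := norm_apply_le_norm_cfcₙ (fun t : ℝ => t) (φ h) ht
      rw [cfcₙ_id' ℝ (φ h), hh, map_mul, map_star, CStarRing.norm_star_mul_self] at this
      rw [hc, sq]; exact this
    rw [map_add, map_mul, e, mul_zero, add_zero]
  · have e : star (x + x * cfcₙ k h) * (x + x * cfcₙ k h) =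
        cfcₙ (fun t => t + t * k t + k t * t + k t * t * k t) h := by
      rw [cfcₙ_add (fun t => t + t * k t + k t * t) (fun t => k t * t * k t) h
          (by fun_prop) (by simp [hk0]) (by fun_prop) (by simp [hk0]),
        cfcₙ_add (fun t => t + t * k t) (fun t => k t * t) h
          (by fun_prop) (by simp [hk0]) (by fun_prop) (by simp [hk0]),
        cfcₙ_add (fun t => t) (fun t => t * k t) h
          (by fun_prop) (by simp [hk0]) (by fun_prop) (by simp [hk0]),
        cfcₙ_mul (fun t => k t * t) k h (by fun_prop) (by simp [hk0]) (by fun_prop) hk0,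
        cfcₙ_mul (fun t => t) k h (by fun_prop) (by simp [hk0]) (by fun_prop) hk0,
        cfcₙ_mul k (fun t => t) h (by fun_prop) hk0 (by fun_prop) (by simp),
        cfcₙ_id' ℝ h, star_add, star_mul, hks.star_eq]
      generalize cfcₙ k h = q
      rw [hh]
      simp only [mul_add, add_mul, mul_assoc]
      abel
    have h1 : ‖x + x * cfcₙ k h‖ * ‖x + x * cfcₙ k h‖ ≤ c := by
      rw [← CStarRing.norm_star_mul_self, e]
      refine norm_cfcₙ_le fun t _ => ?_
      have e2 : t + t * k t + k t * t + k t * t * k t = t * (c / max |t| c) := by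
        have : Real.sqrt (c / max |t| c) * Real.sqrt (c / max |t| c) = c / max |t| c :=
          Real.mul_self_sqrt (by have := hm t; positivity)
        rw [← this]; simp only [hk]; ring
      rw [e2, norm_mul, Real.norm_eq_abs, Real.norm_eq_abs,
        abs_of_pos (by have := hm t; positivity : 0 < c / max |t| c), ← mul_div_assoc,
        div_le_iff₀ (hm t), mul_comm]
      exact mul_le_mul_of_nonneg_left (le_max_left _ _) hc0.le
    exact abs_le_of_sq_le_sq' (by rw [sq, ← hc]; exact h1) (norm_nonneg _) |>.2

end uniq

section matrices

variable {A A' : Type u} [NonUnitalCStarAlgebra A] [NonUnitalCStarAlgebra A']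

theorem exists_cstar_on_matrix (p : ℕ) {N : Matrix (Fin p) (Fin p) A → ℝ}
    (hN : IsCStarNorm N) :
    letI := CStarAlgebra.spectralOrder A
    haveI := CStarAlgebra.spectralOrderedRing A
    ∀ v : CStarMatrix (Fin p) (Fin p) A, N (CStarMatrix.ofMatrix.symm v) = ‖v‖ := by
  let _ := CStarAlgebra.spectralOrder A
  have := CStarAlgebra.spectralOrderedRing A
  have h : IsCStarNorm (M := CStarMatrix (Fin p) (Fin p) A)
      (fun v => N (CStarMatrix.ofMatrix.symm v)) :=
    { add_le := fun x y => hN.add_le (CStarMatrix.ofMatrix.symm x) (CStarMatrix.ofMatrix.symm y)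
      smul_eq := fun c x => hN.smul_eq c (CStarMatrix.ofMatrix.symm x)
      eq_zero_of := fun x hx => hN.eq_zero_of (CStarMatrix.ofMatrix.symm x) hx
      mul_le := fun x y => hN.mul_le (CStarMatrix.ofMatrix.symm x) (CStarMatrix.ofMatrix.symm y)
      star_mul_self := fun x => hN.star_mul_self (CStarMatrix.ofMatrix.symm x) }
  exact fun v => h.eq_norm v

theorem matrix_map_le (p : ℕ) {N : Matrix (Fin p) (Fin p) A → ℝ}
    {N' : Matrix (Fin p) (Fin p) A' → ℝ}
    (hN : IsCStarNorm N) (hN' : IsCStarNorm N') (π : A →⋆ₙₐ[ℂ] A')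
    (v : Matrix (Fin p) (Fin p) A) : N' (v.map π) ≤ N v := by
  let _ := CStarAlgebra.spectralOrder A
  have := CStarAlgebra.spectralOrderedRing A
  let _ := CStarAlgebra.spectralOrder A'
  have := CStarAlgebra.spectralOrderedRing A'
  have h1 := exists_cstar_on_matrix p hN (CStarMatrix.ofMatrix v)
  have h2 := exists_cstar_on_matrix p hN' (CStarMatrix.mapₙₐ π (CStarMatrix.ofMatrix v))
  have h3 := NonUnitalStarAlgHom.norm_apply_le
    (CStarMatrix.mapₙₐ (n := Fin p) π) (CStarMatrix.ofMatrix v)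
  rw [← h1, ← h2] at h3
  exact h3

theorem matrix_lift (p : ℕ) {N : Matrix (Fin p) (Fin p) A → ℝ}
    {N' : Matrix (Fin p) (Fin p) A' → ℝ}
    (hN : IsCStarNorm N) (hN' : IsCStarNorm N') (π : A →⋆ₙₐ[ℂ] A')
    (hπ : Function.Surjective π)
    (v' : Matrix (Fin p) (Fin p) A') :
    ∃ v : Matrix (Fin p) (Fin p) A, v.map π = v' ∧ N v ≤ N' v' := by
  let _ := CStarAlgebra.spectralOrder A
  have := CStarAlgebra.spectralOrderedRing A
  let _ := CStarAlgebra.spectralOrder A'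
  have := CStarAlgebra.spectralOrderedRing A'
  have hs : Function.Surjective (CStarMatrix.mapₙₐ (n := Fin p) π) := by
    intro w
    choose f hf using hπ
    refine ⟨CStarMatrix.ofMatrix (Matrix.of fun i j => f (w i j)), ?_⟩
    ext i j
    exact hf (w i j)
  obtain ⟨v, hv, hle⟩ := exists_norm_lift _ hs (CStarMatrix.ofMatrix v')
  have h1 := exists_cstar_on_matrix p hN v
  have h2 := exists_cstar_on_matrix p hN' (CStarMatrix.ofMatrix v')
  rw [← h1, ← h2] at hle
  exact ⟨CStarMatrix.ofMatrix.symm v, hv, hle⟩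

theorem matrix_one_le {N : Matrix (Fin 1) (Fin 1) A → ℝ}
    (hN : IsCStarNorm N) (a : A) : N (Matrix.of fun _ _ => a) = ‖a‖ := by
  have h : IsCStarNorm (fun a : A => N (Matrix.of fun _ _ => a)) :=
    { add_le := fun x y => hN.add_le _ _
      smul_eq := fun c x => hN.smul_eq c _
      eq_zero_of := fun x hx => congrFun (congrFun (hN.eq_zero_of _ hx) 0) 0
      mul_le := fun x y => by
        have := hN.mul_le (Matrix.of fun _ _ => x) (Matrix.of fun _ _ => y)
        convert this using 2
        ext i j; simp [Matrix.mul_apply]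
      star_mul_self := fun x => by
        have := hN.star_mul_self (Matrix.of fun _ _ => x)
        convert this using 2
        ext i j; simp [Matrix.mul_apply, Matrix.star_apply] }
  exact h.eq_norm a

/-- Right approximate units in kernels of `*`-homomorphisms. -/
theorem exists_approx_unit (π : A →⋆ₙₐ[ℂ] A') :
    ∃ l : Filter A, l.NeBot ∧ (∀ᶠ e in l, π e = 0 ∧ ‖e‖ ≤ 1) ∧
      ∀ j, π j = 0 → Filter.Tendsto (fun e => j * e) l (nhds j) := by
  let S : NonUnitalStarSubalgebra ℂ A :=
    { carrier := {a | π a = 0}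
      add_mem' := by intro a b ha hb; simp_all
      zero_mem' := by simp
      mul_mem' := by intro a b ha hb; simp_all
      smul_mem' := by intro c a ha; simp_all
      star_mem' := by intro a ha; simp_all [map_star] }
  have hφc : Continuous π :=
    AddMonoidHomClass.continuous_of_bound π 1 fun z => by
      simpa using NonUnitalStarAlgHom.norm_apply_le π z
  have : IsClosed (S : Set A) := isClosed_singleton.preimage hφc
  let _ : NonUnitalCStarAlgebra S := NonUnitalStarSubalgebra.nonUnitalCStarAlgebra S
  let _ := CStarAlgebra.spectralOrder S
  have := CStarAlgebra.spectralOrderedRing S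
  have h := CStarAlgebra.increasingApproximateUnit (A := S)
  have := h.neBot
  refine ⟨(CStarAlgebra.approximateUnit S).map (Subtype.val), inferInstance, ?_, ?_⟩
  · rw [Filter.eventually_map]
    filter_upwards [h.eventually_norm] with x hx
    exact ⟨x.2, hx⟩
  · intro j hj
    rw [Filter.tendsto_map'_iff]
    exact (continuous_subtype_val.tendsto _).comp (h.tendsto_mul_left ⟨j, hj⟩)

end matrices

section proj

variable {A B A' B' : Type u} [NonUnitalCStarAlgebra A] [NonUnitalCStarAlgebra B]
    [NonUnitalCStarAlgebra A'] [NonUnitalCStarAlgebra B']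
    {NA : ∀ p : ℕ, Matrix (Fin p) (Fin p) A → ℝ}
    {NB : ∀ q : ℕ, Matrix (Fin q) (Fin q) B → ℝ}
    {NA' : ∀ p : ℕ, Matrix (Fin p) (Fin p) A' → ℝ}
    {NB' : ∀ q : ℕ, Matrix (Fin q) (Fin q) B' → ℝ}

theorem osProjNorm_le (hNA : ∀ p, IsCStarNorm (NA p)) (hNB : ∀ q, IsCStarNorm (NB q))
    (u : A ⊗[ℂ] B) (p q : ℕ) (α : Fin p × Fin q → ℂ) (v : Matrix (Fin p) (Fin p) A)
      (w : Matrix (Fin q) (Fin q) B) (β : Fin p × Fin q → ℂ)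
      (hu : u = ∑ ik : Fin p × Fin q, ∑ jl : Fin p × Fin q,
            (α ik * β jl) • (v ik.1 jl.1 ⊗ₜ[ℂ] w ik.2 jl.2)) :
    osProjNorm NA NB u ≤ Real.sqrt (∑ ik, ‖α ik‖ ^ 2) * NA p v * NB q w *
            Real.sqrt (∑ jl, ‖β jl‖ ^ 2) := by
  refine csInf_le ⟨0, ?_⟩ ⟨p, q, α, v, w, β, hu, rfl⟩
  rintro r ⟨p, q, α, v, w, β, -, rfl⟩
  have h1 := (hNA p).nonneg v
  have h2 := (hNB q).nonneg w
  positivity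

theorem osProjNorm_nonempty {A B : Type u} [AddCommGroup A] [Module ℂ A] [AddCommGroup B]
    [Module ℂ B] (u : A ⊗[ℂ] B) :
    ∃ (p q : ℕ) (α : Fin p × Fin q → ℂ) (v : Matrix (Fin p) (Fin p) A)
      (w : Matrix (Fin q) (Fin q) B) (β : Fin p × Fin q → ℂ),
      u = ∑ ik : Fin p × Fin q, ∑ jl : Fin p × Fin q,
            (α ik * β jl) • (v ik.1 jl.1 ⊗ₜ[ℂ] w ik.2 jl.2) := by
  have h : ∃ (n : ℕ) (a : Fin n → A) (b : Fin n → B), u = ∑ i, a i ⊗ₜ[ℂ] b i := by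
    induction u using TensorProduct.induction_on with
    | zero => exact ⟨0, 0, 0, by simp⟩
    | tmul a b => exact ⟨1, fun _ => a, fun _ => b, by simp⟩
    | add x y hx hy =>
      obtain ⟨n, a, b, rfl⟩ := hx
      obtain ⟨m, c, d, rfl⟩ := hy
      exact ⟨n + m, Fin.append a c, Fin.append b d, by simp [Fin.sum_univ_add]⟩
  obtain ⟨n, a, b, rfl⟩ := h
  refine ⟨n, n, fun ik => if ik.1 = ik.2 then 1 else 0, Matrix.diagonal a, Matrix.diagonal b,
    fun ik => if ik.1 = ik.2 then 1 else 0, ?_⟩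
  simp only [Fintype.sum_prod_type]
  refine Finset.sum_congr rfl fun i _ => ?_
  rw [Finset.sum_eq_single i, Finset.sum_eq_single i, Finset.sum_eq_single i]
  · simp
  · intro j _ hj; simp [hj.symm]
  · simp
  · intro j _ hj
    apply Finset.sum_eq_zero
    intro k _
    simp [Matrix.diagonal_apply_ne _ hj.symm]
  · simp
  · intro j _ hj; simp [hj.symm]
  · simp

theorem exists_of_osProjNorm_lt (u : A ⊗[ℂ] B) (r : ℝ) (h : osProjNorm NA NB u < r) :
    ∃ (p q : ℕ) (α : Fin p × Fin q → ℂ) (v : Matrix (Fin p) (Fin p) A)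
      (w : Matrix (Fin q) (Fin q) B) (β : Fin p × Fin q → ℂ),
      u = ∑ ik : Fin p × Fin q, ∑ jl : Fin p × Fin q,
            (α ik * β jl) • (v ik.1 jl.1 ⊗ₜ[ℂ] w ik.2 jl.2) ∧
      Real.sqrt (∑ ik, ‖α ik‖ ^ 2) * NA p v * NB q w *
            Real.sqrt (∑ jl, ‖β jl‖ ^ 2) < r := by
  obtain ⟨s, ⟨p, q, α, v, w, β, hu, rfl⟩, hs⟩ := exists_lt_of_csInf_lt (by
    obtain ⟨p, q, α, v, w, β, hu⟩ := osProjNorm_nonempty u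
    exact ⟨_, p, q, α, v, w, β, hu, rfl⟩) h
  exact ⟨p, q, α, v, w, β, hu, hs⟩

theorem osProjNorm_tmul_le (hNA : ∀ p, IsCStarNorm (NA p)) (hNB : ∀ q, IsCStarNorm (NB q))
    (a : A) (b : B) : osProjNorm NA NB (a ⊗ₜ[ℂ] b) ≤ ‖a‖ * ‖b‖ := by
  refine (osProjNorm_le hNA hNB (a ⊗ₜ[ℂ] b) 1 1 (fun _ => 1) (Matrix.of fun _ _ => a)
    (Matrix.of fun _ _ => b) (fun _ => 1) (by simp)).trans ?_
  rw [matrix_one_le (hNA 1), matrix_one_le (hNB 1)]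
  simp

/-- The algebraic tensor product map. -/
def algMap (π : A →⋆ₙₐ[ℂ] A') (ρ : B →⋆ₙₐ[ℂ] B') : A ⊗[ℂ] B →ₗ[ℂ] A' ⊗[ℂ] B' :=
  TensorProduct.map (π : A →ₗ[ℂ] A') (ρ : B →ₗ[ℂ] B')

theorem algMap_tmul (π : A →⋆ₙₐ[ℂ] A') (ρ : B →⋆ₙₐ[ℂ] B') (a : A) (b : B) :
    algMap π ρ (a ⊗ₜ[ℂ] b) = π a ⊗ₜ[ℂ] ρ b := rfl

theorem osProjNorm_map_le (hNA : ∀ p, IsCStarNorm (NA p)) (hNB : ∀ q, IsCStarNorm (NB q))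
    (hNA' : ∀ p, IsCStarNorm (NA' p)) (hNB' : ∀ q, IsCStarNorm (NB' q))
    (π : A →⋆ₙₐ[ℂ] A') (ρ : B →⋆ₙₐ[ℂ] B') (u : A ⊗[ℂ] B) :
    osProjNorm NA' NB' (algMap π ρ u) ≤ osProjNorm NA NB u := by
  refine le_of_forall_gt fun r hr => ?_
  obtain ⟨p, q, α, v, w, β, hu, hlt⟩ := exists_of_osProjNorm_lt u r hr
  refine lt_of_le_of_lt ((osProjNorm_le hNA' hNB' _ p q α (v.map π) (w.map ρ) β ?_).trans ?_) hlt
  · rw [hu]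
    simp only [map_sum, map_smul, algMap_tmul, Matrix.map_apply]
  · have h1 := matrix_map_le p (hNA p) (hNA' p) π v
    have h2 := matrix_map_le q (hNB q) (hNB' q) ρ w
    have h3 := (hNA p).nonneg v
    have h4 := (hNB' q).nonneg (w.map ρ)
    gcongr

theorem osProjNorm_lift (hNA : ∀ p, IsCStarNorm (NA p)) (hNB : ∀ q, IsCStarNorm (NB q))
    (hNA' : ∀ p, IsCStarNorm (NA' p)) (hNB' : ∀ q, IsCStarNorm (NB' q))
    (π : A →⋆ₙₐ[ℂ] A') (ρ : B →⋆ₙₐ[ℂ] B')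
    (hπ : Function.Surjective π) (hρ : Function.Surjective ρ)
    (u' : A' ⊗[ℂ] B') (r : ℝ) (hr : osProjNorm NA' NB' u' < r) :
    ∃ u, algMap π ρ u = u' ∧ osProjNorm NA NB u < r := by
  obtain ⟨p, q, α, v', w', β, hu, hlt⟩ := exists_of_osProjNorm_lt u' r hr
  obtain ⟨v, hv, hv1⟩ := matrix_lift p (hNA p) (hNA' p) π hπ v'
  obtain ⟨w, hw, hw1⟩ := matrix_lift q (hNB q) (hNB' q) ρ hρ w'
  refine ⟨_, ?_, lt_of_le_of_lt ((osProjNorm_le hNA hNB _ p q α v w β rfl).trans ?_) hlt⟩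
  · rw [hu, ← hv, ← hw]
    simp only [map_sum, map_smul, algMap_tmul, Matrix.map_apply]
  · have h3 := (hNA' p).nonneg v'
    have h4 := (hNB q).nonneg w
    gcongr

theorem algMap_ker (π : A →⋆ₙₐ[ℂ] A') (ρ : B →⋆ₙₐ[ℂ] B')
    (hπ : Function.Surjective π) (hρ : Function.Surjective ρ)
    (I : Set A) (J : Set B) (hkerπ : ∀ a, π a = 0 ↔ a ∈ I) (hkerρ : ∀ b, ρ b = 0 ↔ b ∈ J)
    (u : A ⊗[ℂ] B) (hu : algMap π ρ u = 0) :
    u ∈ Submodule.span ℂ (Set.image2 (fun a b => a ⊗ₜ[ℂ] b) (Set.univ : Set A) J) ⊔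
      Submodule.span ℂ (Set.image2 (fun a b => a ⊗ₜ[ℂ] b) I (Set.univ : Set B)) := by
  have h := TensorProduct.map_ker
    (LinearMap.exact_subtype_ker_map (π : A →ₗ[ℂ] A')) hπ
    (LinearMap.exact_subtype_ker_map (ρ : B →ₗ[ℂ] B')) hρ
  have hu' : u ∈ LinearMap.ker (TensorProduct.map (π : A →ₗ[ℂ] A') (ρ : B →ₗ[ℂ] B')) := hu
  rw [h] at hu'
  refine SetLike.le_def.1 (sup_le_sup ?_ ?_) hu'
  · rintro _ ⟨x, rfl⟩
    induction x using TensorProduct.induction_on with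
    | zero => simp
    | tmul a b => exact Submodule.subset_span ⟨a, trivial, b, (hkerρ _).1 b.2, rfl⟩
    | add x y hx hy => rw [map_add]; exact add_mem hx hy
  · rintro _ ⟨x, rfl⟩
    induction x using TensorProduct.induction_on with
    | zero => simp
    | tmul a b => exact Submodule.subset_span ⟨a, (hkerπ _).1 a.2, b, trivial, rfl⟩
    | add x y hx hy => rw [map_add]; exact add_mem hx hy

end proj

section final

theorem sum_closed {X : Type*} [NormedAddCommGroup X] [NormedSpace ℂ X] [CompleteSpace X]
    (P Q : Submodule ℂ X) (hP : IsClosed (P : Set X)) (hQ : IsClosed (Q : Set X))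
    (C : ℝ) (hC : 0 < C)
    (H : ∀ p ∈ P, ∀ q ∈ Q, ∃ y ∈ P, ∃ z ∈ Q, y + z = p + q ∧
      ‖y‖ ≤ C * ‖p + q‖ ∧ ‖z‖ ≤ C * ‖p + q‖)
    (x : X) (hx : x ∈ closure ((P ⊔ Q : Submodule ℂ X) : Set X)) :
    ∃ y ∈ P, ∃ z ∈ Q, y + z = x := by
  have : CompleteSpace P := hP.completeSpace_coe
  have : CompleteSpace Q := hQ.completeSpace_coe
  let f0 : (P × Q) →+ X :=
    { toFun := fun g => (g.1 : X) + (g.2 : X)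
      map_zero' := by simp
      map_add' := by intro a b; simp only [Prod.fst_add, Prod.snd_add, Submodule.coe_add]; abel }
  let f : NormedAddGroupHom (P × Q) X := f0.mkNormedAddGroupHom 2 (by
    intro g
    have h1 : ‖(g.1 : X)‖ ≤ ‖g‖ := norm_fst_le g
    have h2 : ‖(g.2 : X)‖ ≤ ‖g‖ := norm_snd_le g
    have h3 := norm_add_le (g.1 : X) (g.2 : X)
    change ‖(g.1 : X) + (g.2 : X)‖ ≤ 2 * ‖g‖
    linarith)
  have hs : f.SurjectiveOnWith (P ⊔ Q).toAddSubgroup C := by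
    intro h hh
    obtain ⟨p, hp, q, hq, rfl⟩ := Submodule.mem_sup.1 hh
    obtain ⟨y, hy, z, hz, e, h1, h2⟩ := H p hp q hq
    refine ⟨(⟨y, hy⟩, ⟨z, hz⟩), e, ?_⟩
    rw [Prod.norm_def]
    exact max_le h1 h2
  obtain ⟨g, hg, -⟩ := controlled_closure_of_complete hC one_pos hs x hx
  exact ⟨g.1, g.1.2, g.2, g.2.2, hg⟩

variable {A B A' B' X X' : Type u}
    [NonUnitalCStarAlgebra A] [NonUnitalCStarAlgebra B]
    [NonUnitalCStarAlgebra A'] [NonUnitalCStarAlgebra B']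
    [NonUnitalNormedRing X] [StarRing X] [NormedSpace ℂ X] [CompleteSpace X]
    [NonUnitalNormedRing X'] [StarRing X'] [NormedSpace ℂ X'] [CompleteSpace X']

/-- `tensorIdeal` as a closed subspace. -/
def tensorSub (ι : A ⊗[ℂ] B →ₗ[ℂ] X) (S : Set A) (T : Set B) : Submodule ℂ X :=
  ((Submodule.span ℂ (Set.image2 (fun a b => a ⊗ₜ[ℂ] b) S T)).map ι).topologicalClosure

theorem coe_tensorSub (ι : A ⊗[ℂ] B →ₗ[ℂ] X) (S : Set A) (T : Set B) :
    (tensorSub ι S T : Set X) = tensorIdeal ι S T := rfl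

/-- An additive, closed property holding on elementary tensors holds on the tensor ideal. -/
theorem tensorSub_induction (ι : A ⊗[ℂ] B →ₗ[ℂ] X) (S : Set A) (T : Set B)
    (hS : ∀ (c : ℂ), ∀ a ∈ S, c • a ∈ S) (Pr : X → Prop) (hcl : IsClosed {x | Pr x})
    (h0 : Pr 0) (hadd : ∀ x y, Pr x → Pr y → Pr (x + y))
    (ht : ∀ a ∈ S, ∀ b ∈ T, Pr (ι (a ⊗ₜ[ℂ] b))) (x : X) (hx : x ∈ tensorSub ι S T) : Pr x := by
  suffices h : (tensorSub ι S T : Set X) ⊆ {x | Pr x} from h hx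
  refine closure_minimal ?_ hcl
  rintro _ ⟨u, hu, rfl⟩
  change Pr (ι u)
  induction hu using Submodule.closure_induction with
  | zero => simpa using h0
  | add x y _ _ h1 h2 => rw [map_add]; exact hadd _ _ h1 h2
  | smul_mem c x hx =>
    obtain ⟨a, ha, b, hb, rfl⟩ := hx
    have := ht (c • a) (hS c a ha) b hb
    rwa [TensorProduct.smul_tmul'] at *

theorem tmul_mem_tensorSub (ι : A ⊗[ℂ] B →ₗ[ℂ] X) {S : Set A} {T : Set B} {a : A} {b : B}
    (ha : a ∈ S) (hb : b ∈ T) : ι (a ⊗ₜ[ℂ] b) ∈ tensorSub ι S T :=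
  subset_closure ⟨_, Submodule.subset_span ⟨a, ha, b, hb, rfl⟩, rfl⟩

theorem tensorSub_univ {ν : A ⊗[ℂ] B → ℝ} {ι : A ⊗[ℂ] B →ₗ[ℂ] X}
    (hX : IsTensorCompletion ν X ι) (x : X) : x ∈ tensorSub ι Set.univ Set.univ := by
  refine closure_mono ?_ (hX.dense x)
  rintro _ ⟨u, rfl⟩
  refine ⟨u, ?_, rfl⟩
  induction u using TensorProduct.induction_on with
  | zero => simp
  | tmul a b => exact Submodule.subset_span ⟨a, trivial, b, trivial, rfl⟩
  | add x y hx hy => exact add_mem hx hy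

theorem mul_mem_tensorSub {ν : A ⊗[ℂ] B → ℝ} {ι : A ⊗[ℂ] B →ₗ[ℂ] X}
    (hX : IsTensorCompletion ν X ι) {S S' : Set A} {T T' : Set B}
    (hS : ∀ (c : ℂ), ∀ a ∈ S, c • a ∈ S) (f : A) (e : B)
    (h1 : ∀ a ∈ S, a * f ∈ S') (h2 : ∀ b ∈ T, b * e ∈ T') (x : X) (hx : x ∈ tensorSub ι S T) :
    x * ι (f ⊗ₜ[ℂ] e) ∈ tensorSub ι S' T' := by
  refine tensorSub_induction ι S T hS (fun x => x * ι (f ⊗ₜ[ℂ] e) ∈ tensorSub ι S' T')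
    ?_ ?_ ?_ ?_ x hx
  · exact (Submodule.isClosed_topologicalClosure _).preimage (continuous_mul_const _)
  · simp
  · intro x y hx hy
    rw [add_mul]; exact add_mem hx hy
  · intro a ha b hb
    rw [hX.mul_tmul]
    exact tmul_mem_tensorSub ι (h1 a ha) (h2 b hb)

theorem tendsto_mul_approx {NA : ∀ p : ℕ, Matrix (Fin p) (Fin p) A → ℝ}
    {NB : ∀ q : ℕ, Matrix (Fin q) (Fin q) B → ℝ}
    (hNA : ∀ p, IsCStarNorm (NA p)) (hNB : ∀ q, IsCStarNorm (NB q))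
    {ι : A ⊗[ℂ] B →ₗ[ℂ] X} (hX : IsTensorCompletion (osProjNorm NA NB) X ι)
    (T : Set B) (l : Filter A) (l' : Filter B)
    (hl : ∀ᶠ e in l, ‖e‖ ≤ 1) (hl' : ∀ᶠ e in l', ‖e‖ ≤ 1)
    (h1 : ∀ a, Filter.Tendsto (fun e => a * e) l (nhds a))
    (h2 : ∀ b ∈ T, Filter.Tendsto (fun e => b * e) l' (nhds b))
    (x : X) (hx : x ∈ tensorSub ι Set.univ T) :
    Filter.Tendsto (fun g : A × B => x * ι (g.1 ⊗ₜ[ℂ] g.2)) (l ×ˢ l') (nhds x) := by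
  have hle : ∀ a b, ‖ι (a ⊗ₜ[ℂ] b)‖ ≤ ‖a‖ * ‖b‖ := fun a b => by
    rw [hX.norm_eq]; exact osProjNorm_tmul_le hNA hNB a b
  have hev : ∀ᶠ g in l ×ˢ l', ‖ι (g.1 ⊗ₜ[ℂ] g.2)‖ ≤ 1 := by
    filter_upwards [hl.prod_mk hl'] with g hg
    exact (hle _ _).trans (mul_le_one₀ hg.1 (norm_nonneg _) hg.2)
  let L : A →L[ℂ] B →L[ℂ] X := LinearMap.mkContinuous₂
    ((TensorProduct.mk ℂ A B).compr₂ ι) 1 (fun a b => by simpa using hle a b)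
  have hLc : Continuous (fun g : A × B => ι (g.1 ⊗ₜ[ℂ] g.2)) := L.continuous₂
  refine tensorSub_induction ι Set.univ T (fun _ _ _ => trivial)
    (fun x => Filter.Tendsto (fun g : A × B => x * ι (g.1 ⊗ₜ[ℂ] g.2)) (l ×ˢ l') (nhds x))
    ?_ ?_ ?_ ?_ x hx
  · rw [← closure_subset_iff_isClosed]
    intro y hy
    change Filter.Tendsto _ _ _
    rw [Metric.tendsto_nhds]
    intro ε hε
    obtain ⟨z, hz, hyz⟩ := Metric.mem_closure_iff.1 hy (ε / 3) (by positivity)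
    have hz' := Metric.tendsto_nhds.1 hz (ε / 3) (by positivity)
    filter_upwards [hz', hev] with g hg hg1
    rw [dist_eq_norm] at *
    have e : y * ι (g.1 ⊗ₜ[ℂ] g.2) - y = (y - z) * ι (g.1 ⊗ₜ[ℂ] g.2) +
        (z * ι (g.1 ⊗ₜ[ℂ] g.2) - z) - (y - z) := by rw [sub_mul]; abel
    rw [e]
    have n1 : ‖(y - z) * ι (g.1 ⊗ₜ[ℂ] g.2)‖ ≤ ‖y - z‖ :=
      (norm_mul_le _ _).trans (mul_le_of_le_one_right (norm_nonneg _) hg1)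
    have n2 := norm_sub_le ((y - z) * ι (g.1 ⊗ₜ[ℂ] g.2) + (z * ι (g.1 ⊗ₜ[ℂ] g.2) - z)) (y - z)
    have n3 := norm_add_le ((y - z) * ι (g.1 ⊗ₜ[ℂ] g.2)) (z * ι (g.1 ⊗ₜ[ℂ] g.2) - z)
    linarith
  · simpa using tendsto_const_nhds
  · intro x y hx hy
    simp only [add_mul]
    exact hx.add hy
  · intro a _ b hb
    simp only [hX.mul_tmul]
    have ht : Filter.Tendsto (fun g : A × B => (a * g.1, b * g.2)) (l ×ˢ l') (nhds (a, b)) :=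
      ((h1 a).comp Filter.tendsto_fst).prodMk_nhds ((h2 b hb).comp Filter.tendsto_snd)
    exact (hLc.tendsto (a, b)).comp ht

end final

/-- For closed ideals `I ⊆ A`, `J ⊆ B` (with `A/I`, `B/J` realized as
C⋆-algebras `A'`, `B'` via the surjective `*`-homomorphisms `π`, `ρ` with kernels `I`, `J`),
the induced map `π ⊗̂ ρ : A ⊗̂ B → (A/I) ⊗̂ (B/J)` (realized as `θ : X → X'`) is a quotient
map: it carries the open unit ball of `A ⊗̂ B` onto that of `(A/I) ⊗̂ (B/J)`; and its kernel
is `A ⊗̂ J + I ⊗̂ B`. -/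
theorem quotient_tensor_map {A B A' B' X X' : Type u}
    [NonUnitalCStarAlgebra A] [NonUnitalCStarAlgebra B]
    [NonUnitalCStarAlgebra A'] [NonUnitalCStarAlgebra B']
    [NonUnitalNormedRing X] [StarRing X] [NormedSpace ℂ X] [CompleteSpace X]
    [NonUnitalNormedRing X'] [StarRing X'] [NormedSpace ℂ X'] [CompleteSpace X']
    (NA : ∀ p : ℕ, Matrix (Fin p) (Fin p) A → ℝ)
    (NB : ∀ q : ℕ, Matrix (Fin q) (Fin q) B → ℝ)
    (NA' : ∀ p : ℕ, Matrix (Fin p) (Fin p) A' → ℝ)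
    (NB' : ∀ q : ℕ, Matrix (Fin q) (Fin q) B' → ℝ)
    (hNA : ∀ p, IsCStarNorm (NA p)) (hNB : ∀ q, IsCStarNorm (NB q))
    (hNA' : ∀ p, IsCStarNorm (NA' p)) (hNB' : ∀ q, IsCStarNorm (NB' q))
    (ι : A ⊗[ℂ] B →ₗ[ℂ] X) (hX : IsTensorCompletion (osProjNorm NA NB) X ι)
    (ι' : A' ⊗[ℂ] B' →ₗ[ℂ] X') (hX' : IsTensorCompletion (osProjNorm NA' NB') X' ι')
    (I : TwoSidedIdeal A) (J : TwoSidedIdeal B)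
    (hI : IsClosed (I : Set A)) (hJ : IsClosed (J : Set B))
    (π : A →⋆ₙₐ[ℂ] A') (ρ : B →⋆ₙₐ[ℂ] B')
    (hπ : Function.Surjective π) (hρ : Function.Surjective ρ)
    (hkerπ : ∀ a, π a = 0 ↔ a ∈ I) (hkerρ : ∀ b, ρ b = 0 ↔ b ∈ J)
    (θ : X →L[ℂ] X')
    (hθ : ∀ (a : A) (b : B), θ (ι (a ⊗ₜ[ℂ] b)) = ι' (π a ⊗ₜ[ℂ] ρ b)) :
    θ '' (Metric.ball (0 : X) 1) = Metric.ball (0 : X') 1 ∧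
    {x : X | θ x = 0} =
      tensorIdeal ι (Set.univ : Set A) (J : Set B) +
        tensorIdeal ι (I : Set A) (Set.univ : Set B) := by
  have hθι : ∀ u, θ (ι u) = ι' (algMap π ρ u) := by
    intro u
    induction u using TensorProduct.induction_on with
    | zero => simp
    | tmul a b => rw [hθ, algMap_tmul]
    | add x y hx hy => simp only [map_add, hx, hy]
  have hcontr : ∀ x, ‖θ x‖ ≤ ‖x‖ := by
    intro x
    refine hX.dense.induction_on (p := fun x => ‖θ x‖ ≤ ‖x‖) x
      (isClosed_le (by fun_prop) (by fun_prop)) fun u => ?_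
    rw [hθι, hX'.norm_eq, hX.norm_eq]
    exact osProjNorm_map_le hNA hNB hNA' hNB' π ρ u
  have hlift : ∀ u' r, ‖ι' u'‖ < r → ∃ u, algMap π ρ u = u' ∧ ‖ι u‖ < r := by
    intro u' r h
    rw [hX'.norm_eq] at h
    obtain ⟨u, hu, hr⟩ := osProjNorm_lift hNA hNB hNA' hNB' π ρ hπ hρ u' r h
    exact ⟨u, hu, by rwa [hX.norm_eq]⟩
  refine ⟨?_, ?_⟩
  · apply Set.Subset.antisymm
    · rintro _ ⟨x, hx, rfl⟩
      rw [mem_ball_zero_iff] at *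
      exact (hcontr x).trans_lt hx
    · intro y hy
      rw [mem_ball_zero_iff] at hy
      by_cases hy0 : y = 0
      · exact ⟨0, by simp, by simp [hy0]⟩
      have hyp : 0 < ‖y‖ := norm_pos_iff.2 hy0
      obtain ⟨δ, hδ, hδy⟩ : ∃ δ : ℝ, 0 < δ ∧ (1 + δ + δ) * ‖y‖ < 1 := by
        refine ⟨(1 - ‖y‖) / 4, by linarith, ?_⟩
        nlinarith
      let f : NormedAddGroupHom X X' :=
        (θ : X →+ X').mkNormedAddGroupHom 1 (fun x => by simpa using hcontr x)
      have hs : f.SurjectiveOnWith (LinearMap.range ι').toAddSubgroup (1 + δ) := by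
        rintro _ ⟨u', rfl⟩
        by_cases h0 : ι' u' = 0
        · exact ⟨0, by simp [h0], by simp [h0]⟩
        have hp : 0 < ‖ι' u'‖ := norm_pos_iff.2 h0
        obtain ⟨u, hu, hlt⟩ := hlift u' ((1 + δ) * ‖ι' u'‖) (by nlinarith)
        exact ⟨ι u, by rw [← hu]; exact hθι u, hlt.le⟩
      obtain ⟨g, hg, hgn⟩ := controlled_closure_of_complete (by linarith : 0 < 1 + δ) hδ hs y
        (hX'.dense y)
      exact ⟨g, by rw [mem_ball_zero_iff]; exact hgn.trans_lt hδy, hg⟩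
  · set P := tensorSub ι (Set.univ : Set A) (J : Set B) with hPdef
    set Q := tensorSub ι (I : Set A) (Set.univ : Set B) with hQdef
    have hIs : ∀ (c : ℂ), ∀ a ∈ (I : Set A), c • a ∈ (I : Set A) := by
      intro c a ha
      have : π a = 0 := (hkerπ a).2 ha
      exact (hkerπ _).1 (by rw [map_smul, this, smul_zero])
    have hPz : ∀ x ∈ P, θ x = 0 := by
      refine tensorSub_induction ι _ _ (fun _ _ _ => Set.mem_univ _) (fun x => θ x = 0)
        (isClosed_eq (by fun_prop) (by fun_prop)) (by simp) ?_ ?_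
      · intro x y hx hy; rw [map_add, hx, hy, add_zero]
      · intro a _ b hb
        rw [hθ, (hkerρ b).2 hb]; simp
    have hQz : ∀ x ∈ Q, θ x = 0 := by
      refine tensorSub_induction ι _ _ hIs (fun x => θ x = 0)
        (isClosed_eq (by fun_prop) (by fun_prop)) (by simp) ?_ ?_
      · intro x y hx hy; rw [map_add, hx, hy, add_zero]
      · intro a ha b _
        rw [hθ, (hkerπ a).2 ha]; simp
    rw [← coe_tensorSub, ← coe_tensorSub]
    apply Set.Subset.antisymm
    · intro x hx
      have hx0 : θ x = 0 := hx
      have hcl : x ∈ closure ((P ⊔ Q : Submodule ℂ X) : Set X) := by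
        rw [Metric.mem_closure_iff]
        intro ε hε
        obtain ⟨u, hu⟩ := Metric.denseRange_iff.1 hX.dense x (ε / 2) (by positivity)
        rw [dist_eq_norm] at hu
        have h1 : ‖ι' (algMap π ρ u)‖ < ε / 2 := by
          rw [← hθι]
          have := hcontr (x - ι u)
          rw [map_sub, hx0, zero_sub, norm_neg] at this
          linarith
        obtain ⟨u2, hu2, hlt⟩ := hlift _ _ h1
        have hk := algMap_ker π ρ hπ hρ I J hkerπ hkerρ (u - u2) (by
          rw [map_sub, hu2, sub_self])
        refine ⟨ι (u - u2), ?_, ?_⟩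
        · obtain ⟨s, hs, t, ht, hst⟩ := Submodule.mem_sup.1 hk
          rw [← hst, map_add]
          exact Submodule.add_mem_sup (subset_closure ⟨s, hs, rfl⟩) (subset_closure ⟨t, ht, rfl⟩)
        · rw [dist_eq_norm, map_sub]
          have e : x - (ι u - ι u2) = (x - ι u) + ι u2 := by abel
          rw [e]
          have := norm_add_le (x - ι u) (ι u2)
          linarith
      obtain ⟨l, hlb, hl, hlt⟩ := exists_approx_unit (0 : A →⋆ₙₐ[ℂ] A)
      obtain ⟨l', hlb', hl', hlt'⟩ := exists_approx_unit ρ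
      obtain ⟨y, hy, z, hz, e⟩ := sum_closed P Q (Submodule.isClosed_topologicalClosure _)
        (Submodule.isClosed_topologicalClosure _) 3 (by norm_num) (by
          intro p hp q hq
          by_cases h0 : p + q = 0
          · exact ⟨0, P.zero_mem, 0, Q.zero_mem, by simp [h0], by simp, by simp⟩
          have hpos : 0 < ‖p + q‖ := norm_pos_iff.2 h0
          have ht := tendsto_mul_approx hNA hNB hX (J : Set B) l l' (hl.mono fun _ h => h.2)
            (hl'.mono fun _ h => h.2) (fun a => hlt a (by simp))
            (fun b hb => hlt' b ((hkerρ b).2 hb)) p hp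
          obtain ⟨g, hg1, hg2⟩ :=
            ((Metric.tendsto_nhds.1 ht ‖p + q‖ hpos).and (hl.prod_mk hl')).exists
          rw [dist_eq_norm] at hg1
          have hgn : ‖ι (g.1 ⊗ₜ[ℂ] g.2)‖ ≤ 1 := by
            rw [hX.norm_eq]
            exact (osProjNorm_tmul_le hNA hNB _ _).trans
              (mul_le_one₀ hg2.1.2 (norm_nonneg _) hg2.2.2)
          have hgJ : g.2 ∈ J := (hkerρ _).1 hg2.2.1
          have hpg : (p + q) * ι (g.1 ⊗ₜ[ℂ] g.2) ∈ P :=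
            mul_mem_tensorSub hX (fun _ _ _ => Set.mem_univ _) g.1 g.2 (fun _ _ => Set.mem_univ _)
              (fun b _ => J.mul_mem_left b _ hgJ) _ (tensorSub_univ hX _)
          have hpg' : p * ι (g.1 ⊗ₜ[ℂ] g.2) ∈ P :=
            mul_mem_tensorSub hX (fun _ _ _ => Set.mem_univ _) g.1 g.2 (fun _ _ => Set.mem_univ _)
              (fun b _ => J.mul_mem_left b _ hgJ) _ (tensorSub_univ hX _)
          have hqg : q * ι (g.1 ⊗ₜ[ℂ] g.2) ∈ Q :=
            mul_mem_tensorSub hX hIs g.1 g.2 (fun a ha => I.mul_mem_right a _ ha)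
              (fun _ _ => Set.mem_univ _) _ hq
          have n1 : ‖(p + q) * ι (g.1 ⊗ₜ[ℂ] g.2)‖ ≤ ‖p + q‖ :=
            (norm_mul_le _ _).trans (mul_le_of_le_one_right (norm_nonneg _) hgn)
          have n2 := norm_sub_le ((p + q) * ι (g.1 ⊗ₜ[ℂ] g.2)) (p * ι (g.1 ⊗ₜ[ℂ] g.2) - p)
          refine ⟨(p + q) * ι (g.1 ⊗ₜ[ℂ] g.2) - (p * ι (g.1 ⊗ₜ[ℂ] g.2) - p),
            P.sub_mem hpg (P.sub_mem hpg' hp), q - q * ι (g.1 ⊗ₜ[ℂ] g.2),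
            Q.sub_mem hq hqg, ?_, ?_, ?_⟩
          · rw [add_mul]; abel
          · linarith
          · have e : q - q * ι (g.1 ⊗ₜ[ℂ] g.2) = (p + q) -
                ((p + q) * ι (g.1 ⊗ₜ[ℂ] g.2) - (p * ι (g.1 ⊗ₜ[ℂ] g.2) - p)) := by
              rw [add_mul]; abel
            rw [e]
            have n3 := norm_sub_le (p + q)
              ((p + q) * ι (g.1 ⊗ₜ[ℂ] g.2) - (p * ι (g.1 ⊗ₜ[ℂ] g.2) - p))
            linarith) x hcl
      exact Set.mem_add.2 ⟨y, hy, z, hz, e⟩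
    · intro x hx
      obtain ⟨y, hy, z, hz, rfl⟩ := Set.mem_add.1 hx
      change θ (y + z) = 0
      rw [map_add, hPz y hy, hQz z hz, add_zero]

end
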